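/- SKH is strongly complete with respect to the class of all models: every SKH-consistent set of L_Kh formulas is satisfiable, i.e., for every SKH-consistent set Γ₀ there exist a model M and a state s of M such that M,s ⊨ φ for all φ ∈ Γ₀. -/

import Mathlib

/-- Formulas of the language L_Kh. -/
inductive Formula (P : Type) : Type
  | top : Formula P
  | atom : P → Formula P
  | neg : Formula P → Formula P
  | and : Formula P → Formula P → Formula P
  | kh : Formula P → Formula P → Formula P

namespace Formula

/-- ⊥ abbreviates ¬⊤. -/
def bot {P : Type} : Formula P := neg top

/-- φ → ψ abbreviates ¬(φ ∧ ¬ψ). -/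
def imp {P : Type} (φ ψ : Formula P) : Formula P := neg (φ.and ψ.neg)

/-- φ ↔ ψ. -/
def iff_ {P : Type} (φ ψ : Formula P) : Formula P := (φ.imp ψ).and (ψ.imp φ)

/-- Uφ abbreviates Kh(¬φ, ⊥). -/
def U {P : Type} (φ : Formula P) : Formula P := kh (neg φ) bot

end Formula

/-- A model (ability map): a labelled transition system with a nonempty set
of states, transitions labelled by action symbols in `A`, and a valuation. -/
structure Model (P A : Type) where
  S : Type
  ne : Nonempty S
  R : A → S → S → Prop
  V : S → Set P

namespace Model

/-- `runs M σ s t` means s →σ t. -/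
def runs {P A : Type} (M : Model P A) : List A → M.S → M.S → Prop
  | [], s, t => s = t
  | a :: σ, s, t => ∃ u, M.R a s u ∧ M.runs σ u t

/-- σ = a₁…aₙ is strongly executable at s: for every k < n and every t
reached from s by the length-k prefix of σ, t has an a_{k+1}-successor. -/
def SE {P A : Type} (M : Model P A) (σ : List A) (s : M.S) : Prop :=
  ∀ (k : ℕ) (hk : k < σ.length) (t : M.S),
    M.runs (σ.take k) s t → ∃ u, M.R (σ.get ⟨k, hk⟩) t u

end Model

/-- Truth of a formula at a state of a model. -/
def Sat {P A : Type} (M : Model P A) : Formula P → M.S → Prop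
  | .top, _ => True
  | .atom p, s => p ∈ M.V s
  | .neg φ, s => ¬ Sat M φ s
  | .and φ ψ, s => Sat M φ s ∧ Sat M ψ s
  | .kh ψ φ, _ => ∃ σ : List A, ∀ s' : M.S, Sat M ψ s' →
      M.SE σ s' ∧ ∀ t : M.S, M.runs σ s' t → Sat M φ t

/-- Validity: truth at every state of every model (over a countable
nonempty set of action symbols). -/
def Valid {P : Type} (φ : Formula P) : Prop :=
  ∀ (A : Type) [Countable A] [Nonempty A] (M : Model P A) (s : M.S), Sat M φ s

/-- Boolean evaluation of a formula, treating atoms and Kh-formulas as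
propositional variables (used to define instances of propositional tautologies). -/
def evalB {P : Type} (v : Formula P → Bool) : Formula P → Bool
  | .top => true
  | .atom p => v (.atom p)
  | .neg φ => !(evalB v φ)
  | .and φ ψ => evalB v φ && evalB v ψ
  | .kh ψ φ => v (.kh ψ φ)

/-- Uniform substitution of formulas for proposition letters. -/
def subst {P : Type} (s : P → Formula P) : Formula P → Formula P
  | .top => .top
  | .atom p => s p
  | .neg φ => (subst s φ).neg
  | .and φ ψ => (subst s φ).and (subst s ψ)
  | .kh ψ φ => (subst s ψ).kh (subst s φ)

/-- The proof system SKH. -/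
inductive Derivable {P : Type} : Formula P → Prop
  /-- all instances of propositional tautologies -/
  | taut {φ : Formula P} : (∀ v : Formula P → Bool, evalB v φ = true) → Derivable φ
  /-- DISTU -/
  | distU (φ ψ : Formula P) : Derivable (((φ.U).and ((φ.imp ψ).U)).imp ψ.U)
  /-- COMPKh -/
  | compKh (φ ρ χ : Formula P) : Derivable (((φ.kh ρ).and (ρ.kh χ)).imp (φ.kh χ))
  /-- EMP -/
  | emp (φ χ : Formula P) : Derivable (((φ.imp χ).U).imp (φ.kh χ))
  /-- TU -/
  | tU (φ : Formula P) : Derivable ((φ.U).imp φ)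
  /-- 4KU -/
  | fourKU (φ χ : Formula P) : Derivable ((φ.kh χ).imp ((φ.kh χ).U))
  /-- 5KU -/
  | fiveKU (φ χ : Formula P) : Derivable (((φ.kh χ).neg).imp (((φ.kh χ).neg).U))
  /-- modus ponens -/
  | mp {φ ψ : Formula P} : Derivable (φ.imp ψ) → Derivable φ → Derivable ψ
  /-- NECU -/
  | necU {φ : Formula P} : Derivable φ → Derivable φ.U
  /-- SUB: uniform substitution -/
  | sub {φ : Formula P} (s : P → Formula P) : Derivable φ → Derivable (subst s φ)

/-- A set of formulas is SKH-consistent if no finite conjunction of its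
members proves ⊥ in SKH. -/
def Consistent {P : Type} (Γ : Set (Formula P)) : Prop :=
  ¬ ∃ l : List (Formula P), (∀ φ ∈ l, φ ∈ Γ) ∧
      Derivable ((l.foldr Formula.and Formula.top).imp Formula.bot)

/-- Maximal consistent set. -/
def MCS {P : Type} (Γ : Set (Formula P)) : Prop :=
  Consistent Γ ∧ ∀ Δ : Set (Formula P), Consistent Δ → Γ ⊆ Δ → Δ = Γ

/-- Δ|_Kh : the Kh-formulas in Δ. -/
def khPart {P : Type} (Δ : Set (Formula P)) : Set (Formula P) :=
  {χ | χ ∈ Δ ∧ ∃ ψ φ : Formula P, χ = ψ.kh φ}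

/-- The states S^c_Γ of the canonical model for Γ. -/
def canonStates {P : Type} (Γ : Set (Formula P)) : Set (Set (Formula P)) :=
  {Δ | MCS Δ ∧ khPart Δ = khPart Γ}

/-- The action symbols Σ_Γ of the canonical model: pairs ⟨ψ,φ⟩ with Kh(ψ,φ) ∈ Γ. -/
def SigmaGamma {P : Type} (Γ : Set (Formula P)) : Type :=
  {pr : Formula P × Formula P // (pr.1.kh pr.2) ∈ Γ}

/-- The canonical model M^c_Γ for a maximal consistent set Γ. -/
def canonicalModel {P : Type} (Γ : Set (Formula P)) (hΓ : MCS Γ) :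
    Model P (SigmaGamma Γ) where
  S := {Δ : Set (Formula P) // Δ ∈ canonStates Γ}
  ne := ⟨⟨Γ, hΓ, rfl⟩⟩
  R := fun a Δ Θ => a.val.1 ∈ Δ.val ∧ a.val.2 ∈ Θ.val
  V := fun Δ => {p | Formula.atom p ∈ Δ.val}

def encF {P : Type} (f : P → ℕ) : Formula P → ℕ
  | .top => Nat.pair 0 0
  | .atom p => Nat.pair 1 (f p)
  | .neg φ => Nat.pair 2 (encF f φ)
  | .and φ ψ => Nat.pair 3 (Nat.pair (encF f φ) (encF f ψ))
  | .kh φ ψ => Nat.pair 4 (Nat.pair (encF f φ) (encF f ψ))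

theorem encF_inj {P : Type} (f : P → ℕ) (hf : Function.Injective f) :
    Function.Injective (encF f) := by
  intro a
  induction a with
  | top => intro b h; cases b <;> simp [encF, Nat.pair_eq_pair] at h ⊢
  | atom p => intro b h; cases b <;> simp [encF, Nat.pair_eq_pair] at h ⊢; exact hf h
  | neg φ ih => intro b h; cases b <;> simp [encF, Nat.pair_eq_pair] at h ⊢; exact ih h
  | and φ ψ ih1 ih2 =>
    intro b h; cases b <;> simp [encF, Nat.pair_eq_pair] at h ⊢; exact ⟨ih1 h.1, ih2 h.2⟩
  | kh φ ψ ih1 ih2 =>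
    intro b h; cases b <;> simp [encF, Nat.pair_eq_pair] at h ⊢; exact ⟨ih1 h.1, ih2 h.2⟩

theorem formula_countable {P : Type} [Countable P] : Countable (Formula P) := by
  obtain ⟨f, hf⟩ := exists_injective_nat P
  exact (encF_inj f hf).countable

abbrev conjL {P : Type} (l : List (Formula P)) : Formula P :=
  l.foldr Formula.and Formula.top

theorem evalB_conj {P : Type} (v : Formula P → Bool) (l : List (Formula P)) :
    evalB v (conjL l) = true ↔ ∀ φ ∈ l, evalB v φ = true := by
  induction l with
  | nil => simp [conjL, evalB]
  | cons a l ih => simp [conjL, evalB] at ih ⊢; rw [ih]; tauto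

theorem evalB_imp {P : Type} (v : Formula P → Bool) (φ ψ : Formula P) :
    evalB v (φ.imp ψ) = true ↔ (evalB v φ = true → evalB v ψ = true) := by
  simp only [Formula.imp, evalB]
  cases evalB v φ <;> cases evalB v ψ <;> simp

theorem evalB_and {P : Type} (v : Formula P → Bool) (φ ψ : Formula P) :
    evalB v (φ.and ψ) = true ↔ (evalB v φ = true ∧ evalB v ψ = true) := by
  simp [evalB]

theorem evalB_neg {P : Type} (v : Formula P → Bool) (φ : Formula P) :
    evalB v (φ.neg) = true ↔ ¬ (evalB v φ = true) := by
  simp [evalB]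

theorem evalB_top {P : Type} (v : Formula P → Bool) :
    evalB v (Formula.top) = true ↔ True := by
  simp [evalB]

theorem evalB_bot {P : Type} (v : Formula P → Bool) :
    evalB v (Formula.bot) = true ↔ False := by
  simp [evalB, Formula.bot]

def Prov {P : Type} (Γ : Set (Formula P)) (φ : Formula P) : Prop :=
  ∃ l : List (Formula P), (∀ φ ∈ l, φ ∈ Γ) ∧ Derivable ((conjL l).imp φ)

theorem consistent_iff {P : Type} (Γ : Set (Formula P)) :
    Consistent Γ ↔ ¬ Prov Γ Formula.bot := Iff.rfl

theorem Prov.mem {P : Type} {Γ : Set (Formula P)} {φ : Formula P} (h : φ ∈ Γ) : Prov Γ φ := by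
  refine ⟨[φ], by simpa using h, .taut fun v => ?_⟩
  simp only [evalB_imp, evalB_conj]
  intro h; exact h φ (by simp)

theorem Prov.thm {P : Type} {Γ : Set (Formula P)} {φ : Formula P} (h : Derivable φ) :
    Prov Γ φ := by
  refine ⟨[], by simp, .mp (.taut fun v => ?_) h⟩
  simp only [evalB_imp]
  tauto

theorem Prov.mp {P : Type} {Γ : Set (Formula P)} {φ ψ : Formula P} (h1 : Prov Γ (φ.imp ψ))
    (h2 : Prov Γ φ) : Prov Γ ψ := by
  obtain ⟨l1, m1, d1⟩ := h1
  obtain ⟨l2, m2, d2⟩ := h2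
  refine ⟨l1 ++ l2, ?_, .mp (.mp (.taut fun v => ?_) d1) d2⟩
  · intro x hx
    rcases List.mem_append.1 hx with h | h
    · exact m1 x h
    · exact m2 x h
  · simp only [evalB_imp, evalB_conj]
    intro h1 h2 h3
    exact h1 (fun x hx => h3 x (by simp [hx])) (h2 (fun x hx => h3 x (by simp [hx])))

theorem Prov.ded {P : Type} {Γ : Set (Formula P)} {φ ψ : Formula P}
    (h : Prov (insert φ Γ) ψ) : Prov Γ (φ.imp ψ) := by
  classical
  obtain ⟨l, m, d⟩ := h
  refine ⟨l.filter (fun x => x ≠ φ), ?_, .mp (.taut fun v => ?_) d⟩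
  · intro x hx
    simp at hx
    rcases m x hx.1 with h | h
    · exact absurd h hx.2
    · exact h
  · simp only [evalB_imp, evalB_conj]
    intro h1 h2 h3
    refine h1 fun x hx => ?_
    by_cases e : x = φ
    · rw [e]; exact h3
    · exact h2 x (by simp [hx, e])

theorem MCS.of_prov {P : Type} {Γ : Set (Formula P)} (hΓ : MCS Γ) {φ : Formula P}
    (h : Prov Γ φ) : φ ∈ Γ := by
  have hc : Consistent (insert φ Γ) := fun hb =>
    hΓ.1 ((Prov.ded (φ := φ) (ψ := Formula.bot) hb).mp h)
  have := hΓ.2 _ hc (Set.subset_insert _ _)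
  rw [← this]; exact Set.mem_insert _ _

theorem MCS.thm {P : Type} {Γ : Set (Formula P)} (hΓ : MCS Γ) {φ : Formula P}
    (h : Derivable φ) : φ ∈ Γ := hΓ.of_prov (Prov.thm h)

theorem MCS.mp {P : Type} {Γ : Set (Formula P)} (hΓ : MCS Γ) {φ ψ : Formula P}
    (h : φ.imp ψ ∈ Γ) (h2 : φ ∈ Γ) : ψ ∈ Γ :=
  hΓ.of_prov ((Prov.mem h).mp (Prov.mem h2))

theorem MCS.neg_iff {P : Type} {Γ : Set (Formula P)} (hΓ : MCS Γ) (φ : Formula P) :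
    φ.neg ∈ Γ ↔ φ ∉ Γ := by
  constructor
  · intro h1 h2
    refine hΓ.1 (Prov.mp (Prov.mp (Prov.thm (.taut fun v => ?_)) (Prov.mem h1)) (Prov.mem h2))
    simp only [evalB_imp, evalB_neg, evalB_bot]
    tauto
  · intro h
    have hn : ¬ Consistent (insert φ Γ) := fun hc => h (by
      rw [← hΓ.2 _ hc (Set.subset_insert _ _)]; exact Set.mem_insert _ _)
    rw [consistent_iff, not_not] at hn
    refine hΓ.of_prov (Prov.mp (Prov.thm (.taut fun v => ?_)) hn.ded)
    simp only [evalB_imp, evalB_neg, evalB_bot]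
    tauto

theorem MCS.and_iff {P : Type} {Γ : Set (Formula P)} (hΓ : MCS Γ) (φ ψ : Formula P) :
    φ.and ψ ∈ Γ ↔ φ ∈ Γ ∧ ψ ∈ Γ := by
  constructor
  · intro h
    constructor
    · refine hΓ.mp (hΓ.thm (.taut fun v => ?_)) h
      simp only [evalB_imp, evalB_and]; tauto
    · refine hΓ.mp (hΓ.thm (.taut fun v => ?_)) h
      simp only [evalB_imp, evalB_and]; tauto
  · rintro ⟨h1, h2⟩
    refine hΓ.mp (hΓ.mp (hΓ.thm (.taut fun v => ?_)) h1) h2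
    simp only [evalB_imp, evalB_and]; tauto

theorem MCS.imp_iff {P : Type} {Γ : Set (Formula P)} (hΓ : MCS Γ) (φ ψ : Formula P) :
    φ.imp ψ ∈ Γ ↔ (φ ∈ Γ → ψ ∈ Γ) := by
  unfold Formula.imp
  rw [hΓ.neg_iff, hΓ.and_iff, hΓ.neg_iff]; tauto

theorem lindenbaum {P : Type} {Γ : Set (Formula P)} (h : Consistent Γ) :
    ∃ Δ, Γ ⊆ Δ ∧ MCS Δ := by
  obtain ⟨Δ, h1, h2⟩ := zorn_subset_nonempty {Δ : Set (Formula P) | Consistent Δ} (by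
    intro c hc hch hne
    refine ⟨⋃₀ c, ?_, fun s hs => Set.subset_sUnion_of_mem hs⟩
    rintro ⟨l, hl, hd⟩
    have : ∃ s ∈ c, ∀ φ ∈ l, φ ∈ s := by
      clear hd
      induction l with
      | nil => obtain ⟨s, hs⟩ := hne; exact ⟨s, hs, by simp⟩
      | cons a l ih =>
        obtain ⟨s, hs, hs2⟩ := ih (fun φ hφ => hl φ (by simp [hφ]))
        obtain ⟨t, ht, hat⟩ := hl a (by simp)
        rcases hch.total hs ht with hst | hst
        · refine ⟨t, ht, ?_⟩
          intro φ hφ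
          rcases List.mem_cons.1 hφ with e | e
          · rw [e]; exact hat
          · exact hst (hs2 _ e)
        · refine ⟨s, hs, ?_⟩
          intro φ hφ
          rcases List.mem_cons.1 hφ with e | e
          · rw [e]; exact hst hat
          · exact hs2 _ e
    obtain ⟨s, hs, hs2⟩ := this
    exact hc hs ⟨l, hs2, hd⟩) Γ h
  exact ⟨Δ, h1, h2.prop, fun Θ hΘ hs => (h2.eq_of_subset hΘ hs).symm⟩

theorem U_mp {P : Type} {Γ : Set (Formula P)} (hΓ : MCS Γ) {φ ψ : Formula P}
    (h1 : (φ.imp ψ).U ∈ Γ) (h2 : φ.U ∈ Γ) : ψ.U ∈ Γ :=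
  hΓ.mp (hΓ.thm (.distU φ ψ)) ((hΓ.and_iff _ _).2 ⟨h2, h1⟩)

theorem U_exists {P : Type} {Γ : Set (Formula P)} (hΓ : MCS Γ) {χ : Formula P}
    (h : ∀ Δ ∈ canonStates Γ, χ ∈ Δ) : χ.U ∈ Γ := by
  by_contra hU
  have hcon : Consistent (insert χ.neg {θ | θ.U ∈ Γ}) := by
    intro hp
    obtain ⟨l, hl, hd⟩ := Prov.ded (φ := χ.neg) (ψ := Formula.bot) hp
    have hc : (conjL l).U ∈ Γ := by
      clear hd
      induction l with
      | nil => exact hΓ.thm (.necU (.taut fun v => by simp [conjL, evalB]))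
      | cons a l ih =>
        refine U_mp hΓ (U_mp hΓ (φ := a) (hΓ.thm (.necU (.taut fun v => ?_))) (hl a (by simp)))
          (ih (fun φ hφ => hl φ (by simp [hφ])))
        simp only [evalB_imp, evalB_conj, List.mem_cons]
        rintro h1 h2 x (rfl | hx)
        · exact h1
        · exact h2 x hx
    refine hU (U_mp hΓ (hΓ.thm (.necU (.mp (.taut fun v => ?_) hd))) hc)
    simp only [evalB_imp, evalB_neg, evalB_bot]
    tauto
  obtain ⟨Δ, hs, hΔ⟩ := lindenbaum hcon
  have hn : χ.neg ∈ Δ := hs (Set.mem_insert _ _)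
  refine (hΔ.neg_iff χ).1 hn (h Δ ⟨hΔ, ?_⟩)
  ext θ
  constructor
  · rintro ⟨h1, ψ, φ, rfl⟩
    refine ⟨?_, ψ, φ, rfl⟩
    by_contra hk
    have := hΓ.mp (hΓ.thm (.fiveKU ψ φ)) ((hΓ.neg_iff _).2 hk)
    exact (hΔ.neg_iff _).1 (hs (Set.mem_insert_of_mem _ this)) h1
  · rintro ⟨h1, ψ, φ, rfl⟩
    refine ⟨?_, ψ, φ, rfl⟩
    exact hs (Set.mem_insert_of_mem _ (hΓ.mp (hΓ.thm (.fourKU ψ φ)) h1))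

theorem kh_of_states {P : Type} {Γ : Set (Formula P)} (hΓ : MCS Γ) {ψ φ : Formula P}
    (h : ∀ Δ ∈ canonStates Γ, ψ ∈ Δ → φ ∈ Δ) : ψ.kh φ ∈ Γ :=
  hΓ.mp (hΓ.thm (.emp ψ φ)) (U_exists hΓ fun Δ hΔ => (hΔ.1.imp_iff _ _).2 (h Δ hΔ))

theorem kh_comp {P : Type} {Γ : Set (Formula P)} (hΓ : MCS Γ) {ψ ρ φ : Formula P}
    (h1 : ψ.kh ρ ∈ Γ) (h2 : ρ.kh φ ∈ Γ) : ψ.kh φ ∈ Γ :=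
  hΓ.mp (hΓ.thm (.compKh ψ ρ φ)) ((hΓ.and_iff _ _).2 ⟨h1, h2⟩)

theorem kh_state {P : Type} {Γ Δ : Set (Formula P)} (hΔ : Δ ∈ canonStates Γ) (ψ φ : Formula P) :
    ψ.kh φ ∈ Δ ↔ ψ.kh φ ∈ Γ := by
  have := hΔ.2
  have h2 : ψ.kh φ ∈ khPart Δ ↔ ψ.kh φ ∈ khPart Γ := by rw [this]
  simpa [khPart] using h2

theorem kh_succ {P : Type} {Γ Δ : Set (Formula P)} (hΓ : MCS Γ) (hΔ : Δ ∈ canonStates Γ)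
    {ψ φ : Formula P} (hk : ψ.kh φ ∈ Γ) (hψ : ψ ∈ Δ) : ∃ Θ ∈ canonStates Γ, φ ∈ Θ := by
  by_contra hno
  push Not at hno
  have h1 : φ.kh Formula.bot ∈ Γ := kh_of_states hΓ fun Θ hΘ h => absurd h (hno Θ hΘ)
  have h2 : ψ.neg.neg.kh ψ ∈ Γ := kh_of_states hΓ fun Θ hΘ h => by
    rw [hΘ.1.neg_iff, hΘ.1.neg_iff, not_not] at h; exact h
  have h3 : ψ.neg.U ∈ Γ := kh_comp hΓ h2 (kh_comp hΓ hk h1)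
  have h4 : ψ.neg.U ∈ Δ := (kh_state hΔ _ _).2 h3
  exact (hΔ.1.neg_iff _).1 (hΔ.1.mp (hΔ.1.thm (.tU _)) h4) hψ

theorem kh_of_plan {P : Type} {Γ : Set (Formula P)} (hΓ : MCS Γ) (φ : Formula P)
    (σ : List (SigmaGamma Γ)) : ∀ ψ : Formula P,
    (∀ s : (canonicalModel Γ hΓ).S, ψ ∈ s.val → (canonicalModel Γ hΓ).SE σ s ∧
      ∀ t : (canonicalModel Γ hΓ).S, (canonicalModel Γ hΓ).runs σ s t → φ ∈ t.val) →
    ψ.kh φ ∈ Γ := by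
  induction σ with
  | nil =>
    intro ψ h
    exact kh_of_states hΓ fun Δ hΔ hψ => (h ⟨Δ, hΔ⟩ hψ).2 ⟨Δ, hΔ⟩ rfl
  | cons a σ ih =>
    intro ψ h
    by_cases hne : ∃ Δ ∈ canonStates Γ, ψ ∈ Δ
    · obtain ⟨Δ, hΔ, hψ⟩ := hne
      have key : ∀ Δ ∈ canonStates Γ, ψ ∈ Δ → a.val.1 ∈ Δ := by
        intro Δ hΔ hψ
        obtain ⟨u, hu⟩ := (h ⟨Δ, hΔ⟩ hψ).1 0 (by simp) ⟨Δ, hΔ⟩ rfl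
        exact hu.1
      refine kh_comp hΓ (kh_of_states hΓ key) (kh_comp hΓ a.property (ih _ ?_))
      intro s hs
      have hR : (canonicalModel Γ hΓ).R a ⟨Δ, hΔ⟩ s := ⟨key Δ hΔ hψ, hs⟩
      obtain ⟨hSE, hrun⟩ := h ⟨Δ, hΔ⟩ hψ
      constructor
      · intro k hk t ht
        exact hSE (k+1) (by simpa using hk) t ⟨s, hR, ht⟩
      · intro t ht
        exact hrun t ⟨s, hR, ht⟩
    · push Not at hne
      exact kh_of_states hΓ fun Δ hΔ hψ => absurd hψ (hne Δ hΔ)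

theorem truth {P : Type} {Γ : Set (Formula P)} (hΓ : MCS Γ) (φ : Formula P) :
    ∀ s : (canonicalModel Γ hΓ).S, Sat (canonicalModel Γ hΓ) φ s ↔ φ ∈ s.val := by
  induction φ with
  | top =>
    intro s
    simp only [Sat, true_iff]
    exact s.property.1.thm (.taut fun v => rfl)
  | atom p => intro s; exact Iff.rfl
  | neg φ ih => intro s; rw [s.property.1.neg_iff, ← ih s]; rfl
  | and φ ψ ih1 ih2 => intro s; rw [s.property.1.and_iff, ← ih1 s, ← ih2 s]; rfl
  | kh ψ φ ih1 ih2 =>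
    intro s
    rw [kh_state s.property]
    simp only [Sat, ih1, ih2]
    constructor
    · rintro ⟨σ, h⟩
      exact kh_of_plan hΓ φ σ ψ h
    · intro hk
      refine ⟨[⟨(ψ, φ), hk⟩], fun s' hs' => ⟨?_, ?_⟩⟩
      · intro k hk' t ht
        have : k = 0 := Nat.lt_one_iff.1 hk'
        subst this
        have ht : s' = t := ht
        subst ht
        obtain ⟨Θ, hΘ, hφ⟩ := kh_succ hΓ s'.property hk hs'
        exact ⟨⟨Θ, hΘ⟩, hs', hφ⟩
      · rintro t ⟨u, hu, hut⟩
        have hut : u = t := hut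
        subst hut
        exact hu.2

/-- SKH is strongly complete w.r.t. the class of all models:
every SKH-consistent set of formulas is satisfiable in some model (over a
countable nonempty set of action symbols) at some state. -/
theorem skh_strongly_complete {P : Type} [Countable P]
    (Γ₀ : Set (Formula P)) (h : Consistent Γ₀) :
    ∃ (A : Type) (_ : Countable A) (_ : Nonempty A) (M : Model P A) (s : M.S),
      ∀ φ ∈ Γ₀, Sat M φ s := by
  obtain ⟨Γ, hs, hΓ⟩ := lindenbaum h
  have : Countable (Formula P) := formula_countable
  refine ⟨SigmaGamma Γ, ?_, ?_, canonicalModel Γ hΓ, ⟨Γ, hΓ, rfl⟩, ?_⟩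
  · unfold SigmaGamma; infer_instance
  · exact ⟨⟨(.top, .top), kh_of_states hΓ fun _ _ h => h⟩⟩
  · intro φ hφ
    exact (truth hΓ φ _).2 (hs hφ)
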